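/- Let (u,P,d) be a smooth solution of the nematic liquid crystal system on ℝ³×(0,T) satisfying the Schwartz decay assumption. Then for every t ∈ (0,T), (d/dt) ½( ‖∇u(t,·)‖_{L²}² + ‖Δd(t,·)‖_{L²}² ) + ‖Δu(t,·)‖_{L²}² + ‖∇Δd(t,·)‖_{L²}² = −Σ_{i,j,k=1}^3 ∫_{ℝ³} ∂_k u_i ∂_i u_j ∂_k u_j dx − 2 Σ_{i,j=1}^3 Σ_{k=1}^3 ∫_{ℝ³} ∂_i u_j ∂_i∂_j d_k Δd_k dx + ∫_{ℝ³} Δ(|∇d|² d)·Δd dx. In particular, the two cross terms ±Σ_{i,k} ∫ ∂_i d_k Δd_k Δu_i dx arising from the momentum and director equations cancel each other. -/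

import Mathlib

open MeasureTheory Real

noncomputable section

/-- `pd i f x` is the `i`-th partial derivative `∂ᵢ f (x)` of `f : ℝⁿ → ℝ`. -/
def pd {n : ℕ} (i : Fin n) (f : EuclideanSpace ℝ (Fin n) → ℝ)
    (x : EuclideanSpace ℝ (Fin n)) : ℝ :=
  fderiv ℝ f x (EuclideanSpace.single i 1)

/-- `lap f x` is the Laplacian `Δf(x) = Σᵢ ∂ᵢ∂ᵢ f (x)`. -/
def lap {n : ℕ} (f : EuclideanSpace ℝ (Fin n) → ℝ)
    (x : EuclideanSpace ℝ (Fin n)) : ℝ :=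
  ∑ i, pd i (fun y => pd i f y) x
/-- The simplified Ericksen–Leslie nematic liquid crystal system on ℝⁿ × (0,T). -/
structure IsNLC (n : ℕ) (T : ℝ)
    (u : ℝ → EuclideanSpace ℝ (Fin n) → EuclideanSpace ℝ (Fin n))
    (P : ℝ → EuclideanSpace ℝ (Fin n) → ℝ)
    (d : ℝ → EuclideanSpace ℝ (Fin n) → EuclideanSpace ℝ (Fin 3)) : Prop where
  smooth_u : ContDiff ℝ (⊤ : ℕ∞) (Function.uncurry u)
  smooth_P : ContDiff ℝ (⊤ : ℕ∞) (Function.uncurry P)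
  smooth_d : ContDiff ℝ (⊤ : ℕ∞) (Function.uncurry d)
  unit : ∀ t ∈ Set.Ioo (0:ℝ) T, ∀ x, ‖d t x‖ = 1
  momentum : ∀ t ∈ Set.Ioo (0:ℝ) T, ∀ x, ∀ j : Fin n,
    deriv (fun s => u s x j) t - lap (fun y => u t y j) x
      + (∑ i, u t x i * pd i (fun y => u t y j) x) + pd j (P t) x
      = - ∑ i, pd i (fun y => ∑ k : Fin 3,
          pd i (fun z => d t z k) y * pd j (fun z => d t z k) y) x
  director : ∀ t ∈ Set.Ioo (0:ℝ) T, ∀ x, ∀ k : Fin 3,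
    deriv (fun s => d s x k) t + ∑ i, u t x i * pd i (fun y => d t y k) x
      = lap (fun y => d t y k) x
        + (∑ i, ∑ k' : Fin 3, (pd i (fun y => d t y k') x) ^ 2) * d t x k
  divfree : ∀ t ∈ Set.Ioo (0:ℝ) T, ∀ x, ∑ i, pd i (fun y => u t y i) x = 0

/-- A family of functions, Schwartz in x with seminorms locally uniformly bounded in t ∈ (0,T). -/
def SchwartzFamily {n : ℕ} (T : ℝ) (f : ℝ → EuclideanSpace ℝ (Fin n) → ℝ) : Prop :=
  ∀ t₀ ∈ Set.Ioo (0:ℝ) T, ∀ k l : ℕ, ∃ ε > 0, ∃ C : ℝ,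
    ∀ t ∈ Set.Ioo (0:ℝ) T, |t - t₀| < ε →
      ∀ x, ‖x‖ ^ k * ‖iteratedFDeriv ℝ l (f t) x‖ ≤ C

/-- Schwartz decay assumption: u, ∂ₜu, ∇d, ∂ₜ∇d are Schwartz in x, locally uniformly in t. -/
def SchwartzDecay (n : ℕ) (T : ℝ)
    (u : ℝ → EuclideanSpace ℝ (Fin n) → EuclideanSpace ℝ (Fin n))
    (d : ℝ → EuclideanSpace ℝ (Fin n) → EuclideanSpace ℝ (Fin 3)) : Prop :=
  (∀ j : Fin n, SchwartzFamily T fun t x => u t x j) ∧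
  (∀ j : Fin n, SchwartzFamily T fun t x => deriv (fun s => u s x j) t) ∧
  (∀ (i : Fin n) (k : Fin 3), SchwartzFamily T fun t x => pd i (fun y => d t y k) x) ∧
  (∀ (i : Fin n) (k : Fin 3),
    SchwartzFamily T fun t x => deriv (fun s => pd i (fun y => d s y k) x) t)

/-!
Differentiating under the integral sign, the time derivative of the energy is
`∑ⱼ ∫ ∇uⱼ · ∇∂ₜuⱼ + ∑ₖ ∫ Δdₖ Δ∂ₜdₖ`. The first sum is the momentum equation tested against `-Δu`.
Up to a gradient, the divergence of the Ericksen stress is `∑ₖ Δdₖ ∇dₖ`; that gradient and the one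
of the pressure are orthogonal to the divergence-free field `Δu`, so the stress contributes only
`∑ᵢ ∑ₖ ∫ ∂ᵢdₖ Δdₖ Δuᵢ`. The second sum is the Laplacian of the director equation tested against
`Δd`, in which `Δ(u · ∇d) = Δu · ∇d + 2 ∇u : ∇²d + u · ∇Δd`: the first term produces the same cross
term with the opposite sign, and the last one integrates to zero since `u` is divergence-free. The
convection term becomes cubic in `∇u` after one integration by parts, for the same reason.
-/

open scoped ContDiff SchwartzMap Topology

variable {n : ℕ} {f g : EuclideanSpace ℝ (Fin n) → ℝ}

section PartialDerivatives

theorem pd_const (i : Fin n) (c : ℝ) : pd i (fun _ => c) = 0 := by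
  ext x
  simp [pd]

theorem pd_add (i : Fin n) (hf : Differentiable ℝ f) (hg : Differentiable ℝ g) :
    pd i (fun y => f y + g y) = fun x => pd i f x + pd i g x := by
  ext x
  simp [pd, fderiv_fun_add (hf x) (hg x)]

theorem pd_mul (i : Fin n) (hf : Differentiable ℝ f) (hg : Differentiable ℝ g) :
    pd i (fun y => f y * g y) = fun x => pd i f x * g x + f x * pd i g x := by
  ext x
  simp only [pd, fderiv_fun_mul (hf x) (hg x), add_apply, smul_apply, smul_eq_mul]
  ring

theorem pd_sum {ι : Type*} [Fintype ι] {F : ι → EuclideanSpace ℝ (Fin n) → ℝ} (i : Fin n)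
    (hF : ∀ a, Differentiable ℝ (F a)) :
    pd i (fun y => ∑ a, F a y) = fun x => ∑ a, pd i (F a) x := by
  ext x
  simp [pd, fderiv_fun_sum fun a _ => hF a x]

theorem fderiv_fderiv_apply_comm {E F : Type*} [NormedAddCommGroup E] [NormedSpace ℝ E]
    [NormedAddCommGroup F] [NormedSpace ℝ F] {h : E → F} (hh : ContDiff ℝ 2 h) (v w x : E) :
    fderiv ℝ (fun y => fderiv ℝ h y v) x w = fderiv ℝ (fun y => fderiv ℝ h y w) x v := by
  have hdiff : DifferentiableAt ℝ (fderiv ℝ h) x :=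
    (hh.fderiv_right (m := 1) (by norm_num)).differentiable_one x
  have hsymm : IsSymmSndFDerivAt ℝ h x := hh.contDiffAt.isSymmSndFDerivAt (by simp)
  simpa [fderiv_clm_apply hdiff (differentiableAt_const _)] using hsymm w v

theorem pd_comm (hf : ContDiff ℝ 2 f) (i j : Fin n) : pd i (pd j f) = pd j (pd i f) :=
  funext fun _ => fderiv_fderiv_apply_comm hf _ _ _

@[fun_prop]
theorem contDiff_pd (i : Fin n) (hf : ContDiff ℝ ∞ f) : ContDiff ℝ ∞ (pd i f) :=
  (hf.fderiv_right (m := ∞) (by simp)).clm_apply contDiff_const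

@[fun_prop]
theorem contDiff_lap (hf : ContDiff ℝ ∞ f) : ContDiff ℝ ∞ (lap f) := by
  unfold lap
  fun_prop

theorem lap_add (hf : ContDiff ℝ ∞ f) (hg : ContDiff ℝ ∞ g) :
    lap (fun y => f y + g y) = fun x => lap f x + lap g x := by
  ext x
  simp only [lap, ← Finset.sum_add_distrib]
  refine Finset.sum_congr rfl fun i _ => ?_
  rw [pd_add i (by fun_prop (disch := simp)) (by fun_prop (disch := simp)),
    pd_add i (by fun_prop (disch := simp)) (by fun_prop (disch := simp))]

theorem lap_sum {ι : Type*} [Fintype ι] {F : ι → EuclideanSpace ℝ (Fin n) → ℝ}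
    (hF : ∀ a, ContDiff ℝ ∞ (F a)) : lap (fun y => ∑ a, F a y) = fun x => ∑ a, lap (F a) x := by
  ext x
  simp only [lap]
  rw [Finset.sum_comm]
  refine Finset.sum_congr rfl fun i _ => ?_
  rw [pd_sum i (by fun_prop (disch := simp)), pd_sum i (by fun_prop (disch := simp))]

theorem lap_mul (hf : ContDiff ℝ ∞ f) (hg : ContDiff ℝ ∞ g) :
    lap (fun y => f y * g y)
      = fun x => lap f x * g x + 2 * ∑ i, pd i f x * pd i g x + f x * lap g x := by
  ext x
  simp only [lap, Finset.mul_sum, Finset.sum_mul, ← Finset.sum_add_distrib]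
  refine Finset.sum_congr rfl fun i _ => ?_
  rw [pd_mul i (by fun_prop (disch := simp)) (by fun_prop (disch := simp)),
    pd_add i (by fun_prop (disch := simp)) (by fun_prop (disch := simp)),
    pd_mul i (by fun_prop (disch := simp)) (by fun_prop (disch := simp)),
    pd_mul i (by fun_prop (disch := simp)) (by fun_prop (disch := simp))]
  ring

theorem lap_pd (hf : ContDiff ℝ ∞ f) (i : Fin n) : lap (pd i f) = pd i (lap f) := by
  ext x
  unfold lap
  rw [pd_sum i (by fun_prop (disch := simp))]
  refine Finset.sum_congr rfl fun j _ => ?_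
  rw [pd_comm (contDiff_infty.1 hf 2) j i, pd_comm (contDiff_infty.1 (contDiff_pd j hf) 2) j i]

end PartialDerivatives

section Schwartz

/-- Being a Schwartz function, as a predicate, since the partial derivatives `pd` act on unbundled
functions. -/
@[fun_prop]
def IsSchwartz (f : EuclideanSpace ℝ (Fin n) → ℝ) : Prop :=
  ∃ φ : 𝓢(EuclideanSpace ℝ (Fin n), ℝ), ⇑φ = f

namespace IsSchwartz

theorem contDiff (hf : IsSchwartz f) : ContDiff ℝ ∞ f := by
  obtain ⟨φ, rfl⟩ := hf
  exact φ.smooth _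

@[fun_prop]
theorem differentiable (hf : IsSchwartz f) : Differentiable ℝ f :=
  hf.contDiff.differentiable (by simp)

theorem integrable (hf : IsSchwartz f) : Integrable f := by
  obtain ⟨φ, rfl⟩ := hf
  exact φ.integrable

@[fun_prop]
theorem add (hf : IsSchwartz f) (hg : IsSchwartz g) : IsSchwartz fun x => f x + g x := by
  obtain ⟨φ, rfl⟩ := hf
  obtain ⟨ψ, rfl⟩ := hg
  exact ⟨φ + ψ, rfl⟩

@[fun_prop]
theorem sub (hf : IsSchwartz f) (hg : IsSchwartz g) : IsSchwartz fun x => f x - g x := by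
  obtain ⟨φ, rfl⟩ := hf
  obtain ⟨ψ, rfl⟩ := hg
  exact ⟨φ - ψ, rfl⟩

@[fun_prop]
theorem mul (hf : IsSchwartz f) (hg : IsSchwartz g) : IsSchwartz fun x => f x * g x := by
  obtain ⟨φ, rfl⟩ := hf
  obtain ⟨ψ, rfl⟩ := hg
  exact ⟨SchwartzMap.pairing (ContinuousLinearMap.mul ℝ ℝ) φ ψ, by ext x; simp⟩

@[fun_prop]
theorem const_mul (c : ℝ) (hf : IsSchwartz f) : IsSchwartz fun x => c * f x := by
  obtain ⟨φ, rfl⟩ := hf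
  exact ⟨c • φ, rfl⟩

@[fun_prop]
theorem sq (hf : IsSchwartz f) : IsSchwartz fun x => f x ^ 2 := by
  simpa only [pow_two] using hf.mul hf

@[fun_prop]
theorem sum {ι : Type*} [Fintype ι] {F : ι → EuclideanSpace ℝ (Fin n) → ℝ}
    (hF : ∀ a, IsSchwartz (F a)) : IsSchwartz fun x => ∑ a, F a x := by
  choose φ hφ using hF
  exact ⟨∑ a, φ a, by ext x; simp [← hφ]⟩

@[fun_prop]
protected theorem pd (i : Fin n) (hf : IsSchwartz f) : IsSchwartz (pd i f) := by
  obtain ⟨φ, rfl⟩ := hf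
  exact ⟨LineDeriv.lineDerivOp (EuclideanSpace.single i (1 : ℝ)) φ, rfl⟩

@[fun_prop]
theorem lap_of_pd (hf : ∀ i, IsSchwartz (_root_.pd i f)) : IsSchwartz (lap f) := by
  unfold lap
  fun_prop

end IsSchwartz

end Schwartz

section IntegralIdentities

theorem integral_pd_mul (i : Fin n) (hf : IsSchwartz f) (hg : IsSchwartz g) :
    ∫ x, pd i f x * g x = -∫ x, f x * pd i g x := by
  obtain ⟨φ, rfl⟩ := hf
  obtain ⟨ψ, rfl⟩ := hg
  exact (neg_eq_iff_eq_neg.2 <|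
    SchwartzMap.integral_mul_lineDerivOp_right_eq_neg_left φ ψ (EuclideanSpace.single i 1)).symm

theorem sum_integral_pd_mul_pd (hf : IsSchwartz f) (hg : IsSchwartz g) :
    ∑ i, ∫ x, pd i f x * pd i g x = -∫ x, lap f x * g x := by
  simp only [lap, Finset.sum_mul]
  rw [integral_finsetSum _ fun i _ => IsSchwartz.integrable (by fun_prop),
    ← Finset.sum_neg_distrib]
  refine Finset.sum_congr rfl fun i _ => ?_
  rw [integral_pd_mul i (by fun_prop) hg, neg_neg]

/-- Two integrations by parts; `f` itself need not decay. -/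
theorem integral_pd_mul_pd_comm (hf : ContDiff ℝ 2 f) (hf' : ∀ i, IsSchwartz (pd i f))
    (hg : IsSchwartz g) (i j : Fin n) :
    ∫ x, pd i f x * pd j g x = ∫ x, pd j f x * pd i g x := by
  rw [← neg_inj, ← integral_pd_mul j (hf' i) hg, ← integral_pd_mul i (hf' j) hg, pd_comm hf]

theorem integral_mul_pd_mul_self (i : Fin n) (hf : IsSchwartz f) (hg : IsSchwartz g) :
    ∫ x, f x * pd i g x * g x = -(1 / 2) * ∫ x, pd i f x * g x ^ 2 := by
  have hsq : pd i (fun y => g y ^ 2) = fun x => 2 * (pd i g x * g x) := by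
    simp only [pow_two, pd_mul i hg.differentiable hg.differentiable]
    ext x
    ring
  rw [integral_pd_mul i hf hg.sq, hsq, neg_mul_neg, ← integral_const_mul]
  congr 1 with x
  ring

variable {U : Fin n → EuclideanSpace ℝ (Fin n) → ℝ}

theorem sum_integral_mul_pd_mul_self (hU : ∀ i, IsSchwartz (U i))
    (hdiv : ∀ x, ∑ i, pd i (U i) x = 0) (hg : IsSchwartz g) :
    ∑ i, ∫ x, U i x * pd i g x * g x = 0 := by
  simp only [fun i => integral_mul_pd_mul_self i (hU i) hg]
  rw [← Finset.mul_sum, ← integral_finsetSum _ fun i _ => IsSchwartz.integrable (by fun_prop)]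
  simp only [← Finset.sum_mul, hdiv, zero_mul, integral_zero, mul_zero]

theorem sum_integral_pd_mul_lap_eq_zero (hU : ∀ i, IsSchwartz (U i))
    (hdiv : ∀ x, ∑ i, pd i (U i) x = 0) (hf : ContDiff ℝ 2 f) (hf' : ∀ i, IsSchwartz (pd i f)) :
    ∑ j, ∫ x, pd j f x * lap (U j) x = 0 := by
  have hgrad (k : Fin n) : ∑ j, pd k (pd j (U j)) = 0 := by
    ext x
    rw [Finset.sum_apply, ← congrFun (pd_sum k fun j => (hU j).pd j |>.differentiable) x,
      funext hdiv, pd_const]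
  calc ∑ j, ∫ x, pd j f x * lap (U j) x
      = ∑ j, ∑ k, ∫ x, pd j f x * pd k (pd k (U j)) x := by
        refine Finset.sum_congr rfl fun j _ => ?_
        simp only [lap, Finset.mul_sum]
        exact integral_finsetSum _ fun k _ => IsSchwartz.integrable (by fun_prop)
    _ = ∑ j, ∑ k, ∫ x, pd k f x * pd k (pd j (U j)) x := by
        refine Finset.sum_congr rfl fun j _ => Finset.sum_congr rfl fun k _ => ?_
        rw [integral_pd_mul_pd_comm hf hf' ((hU j).pd k),
          pd_comm (contDiff_infty.1 (hU j).contDiff 2)]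
    _ = ∑ k, ∫ x, pd k f x * (∑ j, pd k (pd j (U j))) x := by
        rw [Finset.sum_comm]
        refine Finset.sum_congr rfl fun k _ => ?_
        simp only [Finset.sum_apply, Finset.mul_sum]
        exact (integral_finsetSum _ fun j _ => IsSchwartz.integrable (by fun_prop)).symm
    _ = 0 := by simp only [hgrad, Pi.zero_apply, mul_zero, integral_zero, Finset.sum_const_zero]

theorem integral_mul_pd_mul_lap (i : Fin n) (hf : IsSchwartz f) (hg : IsSchwartz g) :
    ∫ x, f x * pd i g x * lap g x = -(∑ k, ∫ x, pd k f x * pd i g x * pd k g x)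
      - ∑ k, ∫ x, f x * pd i (pd k g) x * pd k g x := by
  simp only [lap, Finset.mul_sum]
  rw [integral_finsetSum _ fun k _ => IsSchwartz.integrable (by fun_prop), ← neg_add',
    ← Finset.sum_add_distrib, ← Finset.sum_neg_distrib]
  refine Finset.sum_congr rfl fun k _ => ?_
  rw [← integral_add (IsSchwartz.integrable (by fun_prop)) (IsSchwartz.integrable (by fun_prop)),
    ← neg_eq_iff_eq_neg, ← integral_pd_mul k (by fun_prop) (by fun_prop),
    pd_mul k (by fun_prop) (by fun_prop), pd_comm (contDiff_infty.1 hg.contDiff 2)]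
  simp only [add_mul]

theorem sum_integral_convection_mul_lap (hU : ∀ i, IsSchwartz (U i))
    (hdiv : ∀ x, ∑ i, pd i (U i) x = 0) :
    ∑ j, ∑ i, ∫ x, U i x * pd i (U j) x * lap (U j) x
      = -∑ i, ∑ j, ∑ k, ∫ x, pd k (U i) x * pd i (U j) x * pd k (U j) x := by
  have htransport : ∑ j, ∑ i, ∑ k, ∫ x, U i x * pd i (pd k (U j)) x * pd k (U j) x = 0 := by
    refine Finset.sum_eq_zero fun j _ => ?_
    rw [Finset.sum_comm]
    exact Finset.sum_eq_zero fun k _ => sum_integral_mul_pd_mul_self hU hdiv ((hU j).pd k)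
  simp only [fun i j => integral_mul_pd_mul_lap i (hU i) (hU j), Finset.sum_sub_distrib,
    Finset.sum_neg_distrib, htransport, sub_zero]
  rw [Finset.sum_comm]

end IntegralIdentities

section SpatialEnergyIdentities

variable {κ : Type*} [Fintype κ] {U Ut : Fin n → EuclideanSpace ℝ (Fin n) → ℝ}
  {D Dt N : κ → EuclideanSpace ℝ (Fin n) → ℝ} {P : EuclideanSpace ℝ (Fin n) → ℝ}

/-- The squared norm `|∇D|²` of the gradient of a vector-valued map, given by its components. -/
def gradSq (D : κ → EuclideanSpace ℝ (Fin n) → ℝ) (x : EuclideanSpace ℝ (Fin n)) : ℝ :=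
  ∑ i, ∑ k, pd i (D k) x ^ 2

/-- The cross term `∑ᵢ ∑ₖ ∫ ∂ᵢDₖ ΔDₖ ΔUᵢ`, which enters the energy balances of the momentum
and director equations with opposite signs. -/
def crossTerm (U : Fin n → EuclideanSpace ℝ (Fin n) → ℝ) (D : κ → EuclideanSpace ℝ (Fin n) → ℝ) :
    ℝ :=
  ∑ k, ∑ i, ∫ x, pd i (D k) x * lap (D k) x * lap (U i) x

@[fun_prop]
theorem contDiff_gradSq (hD : ∀ k, ContDiff ℝ ∞ (D k)) : ContDiff ℝ ∞ (gradSq D) := by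
  unfold gradSq
  fun_prop

theorem pd_gradSq (hD : ∀ k, ContDiff ℝ ∞ (D k)) (j : Fin n) :
    pd j (gradSq D) = fun x => ∑ i, ∑ k, 2 * (pd i (D k) x * pd j (pd i (D k)) x) := by
  unfold gradSq
  ext x
  rw [pd_sum j (by fun_prop (disch := simp))]
  refine Finset.sum_congr rfl fun i _ => ?_
  rw [pd_sum j (by fun_prop (disch := simp))]
  refine Finset.sum_congr rfl fun k _ => ?_
  simp only [pow_two]
  rw [pd_mul j (by fun_prop (disch := simp)) (by fun_prop (disch := simp))]
  ring

/-- The gradient part of the divergence of the Ericksen stress is absorbed into the pressure. -/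
theorem sum_pd_stress (hD : ∀ k, ContDiff ℝ ∞ (D k)) (j : Fin n) (x : EuclideanSpace ℝ (Fin n)) :
    ∑ i, pd i (fun y => ∑ k, pd i (D k) y * pd j (D k) y) x
      = (∑ k, lap (D k) x * pd j (D k) x) + 1 / 2 * pd j (gradSq D) x := by
  have hprod (i : Fin n) : pd i (fun y => ∑ k, pd i (D k) y * pd j (D k) y) x
      = ∑ k, (pd i (pd i (D k)) x * pd j (D k) x + pd i (D k) x * pd j (pd i (D k)) x) := by
    rw [pd_sum i (by fun_prop (disch := simp))]
    refine Finset.sum_congr rfl fun k _ => ?_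
    rw [pd_mul i (by fun_prop (disch := simp)) (by fun_prop (disch := simp)),
      pd_comm (contDiff_infty.1 (hD k) 2) i j]
  simp only [hprod, pd_gradSq hD, lap, Finset.sum_add_distrib, Finset.sum_mul, ← Finset.mul_sum]
  rw [Finset.sum_comm]
  ring

theorem integral_lap_mul_of_momentum (j : Fin n) (hU : ∀ i, IsSchwartz (U i))
    (hD : ∀ i k, IsSchwartz (pd i (D k))) (hP : IsSchwartz (pd j P))
    (hmom : ∀ x, Ut j x + (∑ i, U i x * pd i (U j) x) + pd j P x
      = lap (U j) x - ∑ k, lap (D k) x * pd j (D k) x) :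
    ∫ x, lap (U j) x * Ut j x = (∫ x, lap (U j) x ^ 2)
      - (∑ i, ∫ x, U i x * pd i (U j) x * lap (U j) x) - (∫ x, pd j P x * lap (U j) x)
      - ∑ k, ∫ x, pd j (D k) x * lap (D k) x * lap (U j) x := by
  have hexpand (x) : lap (U j) x * Ut j x = lap (U j) x ^ 2
      - (∑ i, U i x * pd i (U j) x * lap (U j) x) - pd j P x * lap (U j) x
      - ∑ k, pd j (D k) x * lap (D k) x * lap (U j) x := by
    simp only [← Finset.sum_mul, fun k => mul_comm (pd j (D k) x)]
    linear_combination lap (U j) x * hmom x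
  simp only [hexpand]
  rw [integral_sub (IsSchwartz.integrable (by fun_prop)) (IsSchwartz.integrable (by fun_prop)),
    integral_sub (IsSchwartz.integrable (by fun_prop)) (IsSchwartz.integrable (by fun_prop)),
    integral_sub (IsSchwartz.integrable (by fun_prop)) (IsSchwartz.integrable (by fun_prop)),
    integral_finsetSum _ fun i _ => IsSchwartz.integrable (by fun_prop),
    integral_finsetSum _ fun k _ => IsSchwartz.integrable (by fun_prop)]

theorem sum_integral_pd_mul_pd_of_momentum (hU : ∀ i, IsSchwartz (U i))
    (hUt : ∀ i, IsSchwartz (Ut i)) (hdiv : ∀ x, ∑ i, pd i (U i) x = 0) (hP : ContDiff ℝ 2 P)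
    (hD : ∀ i k, IsSchwartz (pd i (D k)))
    (hmom : ∀ j x, Ut j x + (∑ i, U i x * pd i (U j) x) + pd j P x
      = lap (U j) x - ∑ k, lap (D k) x * pd j (D k) x) :
    ∑ i, ∑ j, ∫ x, pd i (U j) x * pd i (Ut j) x
      = -(∑ j, ∫ x, lap (U j) x ^ 2)
        - (∑ i, ∑ j, ∑ k, ∫ x, pd k (U i) x * pd i (U j) x * pd k (U j) x)
        + crossTerm U D := by
  have hgradP (j : Fin n) : IsSchwartz (pd j P) := by
    have hpd : pd j P = fun x => lap (U j) x - (∑ k, lap (D k) x * pd j (D k) x) - Ut j x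
        - ∑ i, U i x * pd i (U j) x := by
      ext x
      linarith [hmom j x]
    rw [hpd]
    fun_prop
  rw [Finset.sum_comm]
  simp only [fun j => sum_integral_pd_mul_pd (hU j) (hUt j), Finset.sum_neg_distrib,
    fun j => integral_lap_mul_of_momentum j hU hD (hgradP j) (hmom j), Finset.sum_sub_distrib,
    sum_integral_convection_mul_lap hU hdiv, sum_integral_pd_mul_lap_eq_zero hU hdiv hP hgradP,
    crossTerm]
  rw [Finset.sum_comm (s := (Finset.univ : Finset κ))]
  ring

theorem lap_source_of_director {φ φt ν : EuclideanSpace ℝ (Fin n) → ℝ}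
    (hU : ∀ i, ContDiff ℝ ∞ (U i)) (hφ : ContDiff ℝ ∞ φ) (hφt : ContDiff ℝ ∞ φt)
    (hdir : ∀ x, φt x + ∑ i, U i x * pd i φ x = lap φ x + ν x) :
    lap ν = fun x => lap φt x + (∑ i, pd i φ x * lap (U i) x)
      + 2 * (∑ i, ∑ j, pd i (U j) x * pd i (pd j φ) x)
      + (∑ i, U i x * pd i (lap φ) x) - lap (lap φ) x := by
  have hν : ContDiff ℝ ∞ ν := by
    have hsub : ν = fun x => φt x + (∑ i, U i x * pd i φ x) - lap φ x := by
      ext x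
      linarith [hdir x]
    rw [hsub]
    fun_prop
  have hlap := congrArg lap (funext hdir)
  rw [lap_add hφt (by fun_prop), lap_sum (by fun_prop), lap_add (by fun_prop) hν] at hlap
  simp only [fun i => lap_mul (hU i) (contDiff_pd i hφ), lap_pd hφ, Finset.sum_add_distrib,
    ← Finset.mul_sum] at hlap
  ext x
  rw [Finset.sum_comm]
  simp only [fun i => mul_comm (pd i φ x)]
  linarith [congrFun hlap x]

theorem integral_lap_mul_lap_of_director {φ φt ν : EuclideanSpace ℝ (Fin n) → ℝ}
    (hU : ∀ i, IsSchwartz (U i)) (hdiv : ∀ x, ∑ i, pd i (U i) x = 0)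
    (hφ : ContDiff ℝ ∞ φ) (hφt : ContDiff ℝ ∞ φt)
    (hφ' : ∀ i, IsSchwartz (pd i φ)) (hν : IsSchwartz (lap ν))
    (hdir : ∀ x, φt x + ∑ i, U i x * pd i φ x = lap φ x + ν x) :
    ∫ x, lap φ x * lap φt x = -(∑ i, ∫ x, pd i (lap φ) x ^ 2)
      + (∫ x, lap ν x * lap φ x)
      - (∑ i, ∫ x, pd i φ x * lap φ x * lap (U i) x)
      - 2 * ∑ i, ∑ j, ∫ x, pd i (U j) x * pd i (pd j φ) x * lap φ x := by
  have hexpand (x) : lap φ x * lap φt x = lap (lap φ) x * lap φ x + lap ν x * lap φ x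
      - (∑ i, pd i φ x * lap φ x * lap (U i) x)
      - 2 * (∑ i, ∑ j, pd i (U j) x * pd i (pd j φ) x * lap φ x)
      - ∑ i, U i x * pd i (lap φ) x * lap φ x := by
    simp only [lap_source_of_director (fun i => (hU i).contDiff) hφ hφt hdir, ← Finset.sum_mul,
      fun i => mul_right_comm (pd i φ x) (lap φ x)]
    ring
  have hdissipation : ∫ x, lap (lap φ) x * lap φ x = -∑ i, ∫ x, pd i (lap φ) x ^ 2 := by
    simp only [pow_two]
    rw [sum_integral_pd_mul_pd (by fun_prop) (by fun_prop), neg_neg]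
  simp only [hexpand]
  rw [integral_sub (IsSchwartz.integrable (by fun_prop)) (IsSchwartz.integrable (by fun_prop)),
    integral_sub (IsSchwartz.integrable (by fun_prop)) (IsSchwartz.integrable (by fun_prop)),
    integral_sub (IsSchwartz.integrable (by fun_prop)) (IsSchwartz.integrable (by fun_prop)),
    integral_add (IsSchwartz.integrable (by fun_prop)) (IsSchwartz.integrable (by fun_prop)),
    integral_const_mul, hdissipation,
    integral_finsetSum _ fun i _ => IsSchwartz.integrable (by fun_prop),
    integral_finsetSum _ fun i _ => IsSchwartz.integrable (by fun_prop),
    integral_finsetSum _ fun i _ => IsSchwartz.integrable (by fun_prop),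
    sum_integral_mul_pd_mul_self hU hdiv (by fun_prop), sub_zero]
  simp only [fun i => integral_finsetSum Finset.univ fun j _ => IsSchwartz.integrable
    (f := fun x => pd i (U j) x * pd i (pd j φ) x * lap φ x) (by fun_prop)]

theorem isSchwartz_lap_source_of_director {φ φt ν : EuclideanSpace ℝ (Fin n) → ℝ}
    (hU : ∀ i, IsSchwartz (U i)) (hφ : ContDiff ℝ ∞ φ) (hφt : ContDiff ℝ ∞ φt)
    (hφ' : ∀ i, IsSchwartz (pd i φ)) (hφt' : ∀ i, IsSchwartz (pd i φt))
    (hdir : ∀ x, φt x + ∑ i, U i x * pd i φ x = lap φ x + ν x) : IsSchwartz (lap ν) := by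
  rw [lap_source_of_director (fun i => (hU i).contDiff) hφ hφt hdir]
  fun_prop

theorem sum_integral_lap_mul_lap_of_director (hU : ∀ i, IsSchwartz (U i))
    (hdiv : ∀ x, ∑ i, pd i (U i) x = 0)
    (hD : ∀ k, ContDiff ℝ ∞ (D k)) (hDt : ∀ k, ContDiff ℝ ∞ (Dt k))
    (hD' : ∀ i k, IsSchwartz (pd i (D k))) (hDt' : ∀ i k, IsSchwartz (pd i (Dt k)))
    (hdir : ∀ k x, Dt k x + ∑ i, U i x * pd i (D k) x = lap (D k) x + N k x) :
    ∑ k, ∫ x, lap (D k) x * lap (Dt k) x = -(∑ i, ∑ k, ∫ x, pd i (lap (D k)) x ^ 2)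
      + (∫ x, ∑ k, lap (N k) x * lap (D k) x) - crossTerm U D
      - 2 * ∑ i, ∑ j, ∑ k, ∫ x, pd i (U j) x * pd i (pd j (D k)) x * lap (D k) x := by
  have hN (k) : IsSchwartz (lap (N k)) :=
    isSchwartz_lap_source_of_director hU (hD k) (hDt k) (fun i => hD' i k) (fun i => hDt' i k)
      (hdir k)
  have hswap (F : κ → Fin n → Fin n → ℝ) : ∑ k, ∑ i, ∑ j, F k i j = ∑ i, ∑ j, ∑ k, F k i j := by
    rw [Finset.sum_comm]
    exact Finset.sum_congr rfl fun i _ => Finset.sum_comm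
  simp only [fun k => integral_lap_mul_lap_of_director hU hdiv (hD k) (hDt k) (fun i => hD' i k)
    (hN k) (hdir k), Finset.sum_sub_distrib, Finset.sum_add_distrib, Finset.sum_neg_distrib,
    ← Finset.mul_sum, hswap, crossTerm]
  rw [integral_finsetSum _ fun k _ => IsSchwartz.integrable (by fun_prop),
    Finset.sum_comm (s := (Finset.univ : Finset κ))]

theorem energy_balance (hU : ∀ i, IsSchwartz (U i)) (hUt : ∀ i, IsSchwartz (Ut i))
    (hdiv : ∀ x, ∑ i, pd i (U i) x = 0) (hP : ContDiff ℝ 2 P)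
    (hD : ∀ k, ContDiff ℝ ∞ (D k)) (hDt : ∀ k, ContDiff ℝ ∞ (Dt k))
    (hD' : ∀ i k, IsSchwartz (pd i (D k))) (hDt' : ∀ i k, IsSchwartz (pd i (Dt k)))
    (hmom : ∀ j x, Ut j x - lap (U j) x + (∑ i, U i x * pd i (U j) x) + pd j P x
      = -∑ i, pd i (fun y => ∑ k, pd i (D k) y * pd j (D k) y) x)
    (hdir : ∀ k x, Dt k x + ∑ i, U i x * pd i (D k) x = lap (D k) x + N k x) :
    (∑ i, ∑ j, ∫ x, pd i (U j) x * pd i (Ut j) x) + ∑ k, ∫ x, lap (D k) x * lap (Dt k) x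
      = -(∑ i, ∑ j, ∑ k, ∫ x, pd k (U i) x * pd i (U j) x * pd k (U j) x)
        - 2 * (∑ i, ∑ j, ∑ k, ∫ x, pd i (U j) x * pd i (pd j (D k)) x * lap (D k) x)
        + (∫ x, ∑ k, lap (N k) x * lap (D k) x)
        - (∑ j, ∫ x, lap (U j) x ^ 2) - ∑ i, ∑ k, ∫ x, pd i (lap (D k)) x ^ 2 := by
  have hQ : ContDiff ℝ 2 fun x => P x + 1 / 2 * gradSq D x :=
    hP.add (contDiff_const.mul (contDiff_infty.1 (contDiff_gradSq hD) 2))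
  have hgradQ (j) : pd j (fun x => P x + 1 / 2 * gradSq D x)
      = fun x => pd j P x + 1 / 2 * pd j (gradSq D) x := by
    rw [pd_add j (hP.differentiable two_ne_zero) (by fun_prop (disch := simp)),
      pd_mul j (by fun_prop) (by fun_prop (disch := simp)), pd_const]
    simp only [Pi.zero_apply, zero_mul, zero_add]
  have hvelocity := sum_integral_pd_mul_pd_of_momentum (D := D) hU hUt hdiv hQ hD' fun j x => by
    rw [hgradQ]
    linarith [hmom j x, sum_pd_stress hD j x]
  have hdirector := sum_integral_lap_mul_lap_of_director hU hdiv hD hDt hD' hDt' hdir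
  linarith

end SpatialEnergyIdentities

section TimeDerivative

variable {F : ℝ → EuclideanSpace ℝ (Fin n) → ℝ}

/-- The time derivative `∂ₜF (t, x)`, as a function with the same curried arguments as `F`. -/
def timeDeriv (F : ℝ → EuclideanSpace ℝ (Fin n) → ℝ) (t : ℝ) (x : EuclideanSpace ℝ (Fin n)) : ℝ :=
  deriv (fun s => F s x) t

theorem contDiff_time_slice (hF : ContDiff ℝ ∞ (Function.uncurry F)) (t : ℝ) :
    ContDiff ℝ ∞ (F t) :=
  hF.comp (contDiff_prodMk_right t)

theorem hasDerivAt_timeDeriv (hF : ContDiff ℝ ∞ (Function.uncurry F)) (t : ℝ)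
    (x : EuclideanSpace ℝ (Fin n)) : HasDerivAt (fun s => F s x) (timeDeriv F t x) t :=
  ((hF.comp (contDiff_prodMk_left x)).differentiable (by simp) t).hasDerivAt

theorem uncurry_pd (hF : ContDiff ℝ ∞ (Function.uncurry F)) (i : Fin n) :
    Function.uncurry (fun t => pd i (F t))
      = fun p => fderiv ℝ (Function.uncurry F) p (0, EuclideanSpace.single i 1) := by
  ext ⟨t, x⟩
  have hchain := (hF.differentiable (by simp) (t, x)).hasFDerivAt.comp x
    (hasFDerivAt_prodMk_right t x)
  exact DFunLike.congr_fun hchain.fderiv (EuclideanSpace.single i 1)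

theorem uncurry_timeDeriv (hF : ContDiff ℝ ∞ (Function.uncurry F)) :
    Function.uncurry (timeDeriv F) = fun p => fderiv ℝ (Function.uncurry F) p (1, 0) := by
  ext ⟨t, x⟩
  have hchain := (hF.differentiable (by simp) (t, x)).hasFDerivAt.comp_hasDerivAt t
    ((hasDerivAt_id t).prodMk (hasDerivAt_const t x))
  exact hchain.deriv

theorem contDiff_uncurry_pd (hF : ContDiff ℝ ∞ (Function.uncurry F)) (i : Fin n) :
    ContDiff ℝ ∞ (Function.uncurry fun t => pd i (F t)) := by
  rw [uncurry_pd hF]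
  exact (hF.fderiv_right (by simp)).clm_apply contDiff_const

theorem contDiff_uncurry_timeDeriv (hF : ContDiff ℝ ∞ (Function.uncurry F)) :
    ContDiff ℝ ∞ (Function.uncurry (timeDeriv F)) := by
  rw [uncurry_timeDeriv hF]
  exact (hF.fderiv_right (by simp)).clm_apply contDiff_const

theorem timeDeriv_pd (hF : ContDiff ℝ ∞ (Function.uncurry F)) (i : Fin n) :
    timeDeriv (fun t => pd i (F t)) = fun t => pd i (timeDeriv F t) := by
  refine Function.uncurry_injective ?_
  rw [uncurry_timeDeriv (contDiff_uncurry_pd hF i), uncurry_pd hF,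
    uncurry_pd (contDiff_uncurry_timeDeriv hF), uncurry_timeDeriv hF]
  exact funext fun _ => fderiv_fderiv_apply_comm (contDiff_infty.1 hF 2) _ _ _

theorem timeDeriv_sum {ι : Type*} [Fintype ι] {F : ι → ℝ → EuclideanSpace ℝ (Fin n) → ℝ}
    (hF : ∀ a, ContDiff ℝ ∞ (Function.uncurry (F a))) :
    timeDeriv (fun t x => ∑ a, F a t x) = fun t x => ∑ a, timeDeriv (F a) t x := by
  ext t x
  exact deriv_fun_sum fun a _ => (hasDerivAt_timeDeriv (hF a) t x).differentiableAt

theorem timeDeriv_lap (hF : ContDiff ℝ ∞ (Function.uncurry F)) :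
    timeDeriv (fun t => lap (F t)) = fun t => lap (timeDeriv F t) := by
  have hpd (i) := contDiff_uncurry_pd hF i
  refine (timeDeriv_sum fun i => contDiff_uncurry_pd (hpd i) i).trans ?_
  simp only [fun i => timeDeriv_pd (hpd i) i, timeDeriv_pd hF]
  rfl

end TimeDerivative

section SchwartzEvolution

variable {T t : ℝ} {F G : ℝ → EuclideanSpace ℝ (Fin n) → ℝ}

theorem schwartzFamily_iff : SchwartzFamily T F ↔ ∀ t ∈ Set.Ioo 0 T, ∀ k l : ℕ, ∃ C : ℝ,
    ∀ᶠ s in 𝓝 t, ∀ x, ‖x‖ ^ k * ‖iteratedFDeriv ℝ l (F s) x‖ ≤ C := by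
  refine forall₄_congr fun t ht k l => ⟨?_, ?_⟩
  · rintro ⟨ε, hε, C, hC⟩
    refine ⟨C, ?_⟩
    filter_upwards [Ioo_mem_nhds ht.1 ht.2, Metric.ball_mem_nhds t hε] with s hs hsε
    exact hC s hs hsε
  · rintro ⟨C, hC⟩
    obtain ⟨ε, hε, hball⟩ := Metric.eventually_nhds_iff.1 hC
    exact ⟨ε, hε, C, fun s _ hs => hball hs⟩

namespace SchwartzFamily

theorem isSchwartz (hF : SchwartzFamily T F) (ht : t ∈ Set.Ioo 0 T) (hsm : ContDiff ℝ ∞ (F t)) :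
    IsSchwartz (F t) := by
  refine ⟨⟨F t, hsm, fun k l => ?_⟩, rfl⟩
  obtain ⟨C, hC⟩ := schwartzFamily_iff.1 hF t ht k l
  exact ⟨C, hC.self_of_nhds⟩

protected theorem pd (hF : SchwartzFamily T F) (hsm : ∀ t, ContDiff ℝ ∞ (F t)) (i : Fin n) :
    SchwartzFamily T fun t => pd i (F t) := by
  refine schwartzFamily_iff.2 fun t ht k l => ?_
  obtain ⟨C, hC⟩ := schwartzFamily_iff.1 hF t ht k (l + 1)
  refine ⟨C, hC.mono fun s hs x => le_trans ?_ (hs x)⟩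
  have hbound := norm_iteratedFDeriv_clm_apply_const (x := x) (n := l) (N := ∞)
    (c := EuclideanSpace.single i (1 : ℝ)) ((hsm s).fderiv_right (m := ∞) (by simp)).contDiffAt
    (by exact_mod_cast le_top)
  rw [norm_iteratedFDeriv_fderiv, PiLp.norm_single, norm_one, one_mul] at hbound
  gcongr
  exact hbound

protected theorem sum {ι : Type*} [Fintype ι] {F : ι → ℝ → EuclideanSpace ℝ (Fin n) → ℝ}
    (hF : ∀ a, SchwartzFamily T (F a)) (hsm : ∀ a t, ContDiff ℝ ∞ (F a t)) :
    SchwartzFamily T fun t x => ∑ a, F a t x := by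
  refine schwartzFamily_iff.2 fun t ht k l => ?_
  choose C hC using fun a => schwartzFamily_iff.1 (hF a) t ht k l
  refine ⟨∑ a, C a, ?_⟩
  filter_upwards [Filter.eventually_all.2 hC] with s hs x
  rw [iteratedFDeriv_fun_sum_apply fun a _ => (contDiff_infty.1 (hsm a s) l).contDiffAt]
  calc ‖x‖ ^ k * ‖∑ a, iteratedFDeriv ℝ l (F a s) x‖
      ≤ ∑ a, ‖x‖ ^ k * ‖iteratedFDeriv ℝ l (F a s) x‖ := by
        rw [← Finset.mul_sum]
        gcongr
        exact norm_sum_le _ _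
    _ ≤ ∑ a, C a := Finset.sum_le_sum fun a _ => hs a x

theorem exists_abs_le (hF : SchwartzFamily T F) (ht : t ∈ Set.Ioo 0 T) :
    ∃ C, ∀ᶠ s in 𝓝 t, ∀ x, |F s x| ≤ C := by
  simpa using schwartzFamily_iff.1 hF t ht 0 0

theorem exists_integrable_bound (hF : SchwartzFamily T F) (ht : t ∈ Set.Ioo 0 T) :
    ∃ B : EuclideanSpace ℝ (Fin n) → ℝ, Integrable B ∧ ∀ᶠ s in 𝓝 t, ∀ x, |F s x| ≤ B x := by
  obtain ⟨C₀, h₀⟩ := hF.exists_abs_le ht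
  obtain ⟨C₁, h₁⟩ := schwartzFamily_iff.1 hF t ht (n + 1) 0
  refine ⟨fun x => 2 ^ (n + 1) * (C₀ + C₁) * (1 + ‖x‖) ^ (-((n + 1 : ℕ) : ℝ)),
    (integrable_one_add_norm (by simp)).const_mul _, ?_⟩
  filter_upwards [h₀, h₁] with s hs₀ hs₁ x
  simpa using pow_mul_le_of_le_of_pow_mul_le (k := 0) (l := n + 1) (norm_nonneg x)
    (abs_nonneg (F s x)) (hs₀ x) (by simpa using hs₁ x)

end SchwartzFamily

/-- A smooth function of time and space which, together with its time derivative, is Schwartz in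
space, locally uniformly in time. This is what is needed to differentiate the spatial integral of
its square under the integral sign. -/
structure IsSchwartzEvolution (T : ℝ) (F : ℝ → EuclideanSpace ℝ (Fin n) → ℝ) : Prop where
  smooth : ContDiff ℝ ∞ (Function.uncurry F)
  decay : SchwartzFamily T F
  decay_timeDeriv : SchwartzFamily T (timeDeriv F)

namespace IsSchwartzEvolution

theorem isSchwartz (hF : IsSchwartzEvolution T F) (ht : t ∈ Set.Ioo 0 T) : IsSchwartz (F t) :=
  hF.decay.isSchwartz ht (contDiff_time_slice hF.smooth t)

theorem isSchwartz_timeDeriv (hF : IsSchwartzEvolution T F) (ht : t ∈ Set.Ioo 0 T) :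
    IsSchwartz (timeDeriv F t) :=
  hF.decay_timeDeriv.isSchwartz ht (contDiff_time_slice (contDiff_uncurry_timeDeriv hF.smooth) t)

protected theorem pd (hF : IsSchwartzEvolution T F) (i : Fin n) :
    IsSchwartzEvolution T fun t => pd i (F t) where
  smooth := contDiff_uncurry_pd hF.smooth i
  decay := hF.decay.pd (contDiff_time_slice hF.smooth) i
  decay_timeDeriv := by
    rw [timeDeriv_pd hF.smooth]
    exact hF.decay_timeDeriv.pd (contDiff_time_slice (contDiff_uncurry_timeDeriv hF.smooth)) i

protected theorem sum {ι : Type*} [Fintype ι] {F : ι → ℝ → EuclideanSpace ℝ (Fin n) → ℝ}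
    (hF : ∀ a, IsSchwartzEvolution T (F a)) : IsSchwartzEvolution T fun t x => ∑ a, F a t x where
  smooth := ContDiff.sum fun a _ => (hF a).smooth
  decay := .sum (fun a => (hF a).decay) fun a => contDiff_time_slice (hF a).smooth
  decay_timeDeriv := by
    rw [timeDeriv_sum fun a => (hF a).smooth]
    exact .sum (fun a => (hF a).decay_timeDeriv) fun a =>
      contDiff_time_slice (contDiff_uncurry_timeDeriv (hF a).smooth)

theorem lap_of_pd (hF : ∀ i, IsSchwartzEvolution T fun t => _root_.pd i (F t)) :
    IsSchwartzEvolution T fun t => lap (F t) :=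
  .sum fun i => (hF i).pd i

theorem hasDerivAt_integral_sq (hF : IsSchwartzEvolution T F) (ht : t ∈ Set.Ioo 0 T) :
    HasDerivAt (fun s => ∫ x, F s x ^ 2) (2 * ∫ x, F t x * timeDeriv F t x) t := by
  have hcont (s) : Continuous (F s) := (contDiff_time_slice hF.smooth s).continuous
  have hcont' : Continuous (timeDeriv F t) := (hF.isSchwartz_timeDeriv ht).contDiff.continuous
  obtain ⟨C, hC⟩ := hF.decay.exists_abs_le ht
  obtain ⟨B, hBint, hB⟩ := hF.decay_timeDeriv.exists_integrable_bound ht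
  have hbound : ∀ᶠ s in 𝓝 t, ∀ x, ‖2 * (F s x * timeDeriv F s x)‖ ≤ 2 * (C * B x) := by
    filter_upwards [hC, hB] with s hsC hsB x
    rw [norm_mul, norm_mul, norm_two]
    gcongr
    exacts [(abs_nonneg _).trans (hsC x), hsC x, hsB x]
  have hderiv (x s) : HasDerivAt (fun s => F s x ^ 2) (2 * (F s x * timeDeriv F s x)) s :=
    ((hasDerivAt_timeDeriv hF.smooth s x).fun_pow 2).congr_deriv (by ring)
  rw [← integral_const_mul]
  exact (hasDerivAt_integral_of_dominated_loc_of_deriv_le hbound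
    (.of_forall fun s => ((hcont s).pow 2).aestronglyMeasurable)
    (hF.isSchwartz ht).sq.integrable (by fun_prop)
    (.of_forall fun x s hs => hs x) ((hBint.const_mul C).const_mul 2)
    (.of_forall fun x s _ => hderiv x s)).2

end IsSchwartzEvolution

end SchwartzEvolution

section EnergyIdentity

variable {κ : Type*} [Fintype κ]

/-- The director system with an arbitrary source `N` in place of `|∇d|² d`, in terms of the
components of the velocity and of a director in `ℝ^κ` of any length. Besides the nematic flow this
covers, for instance, the Ginzburg–Landau relaxation, where `N = (1 - |d|²) d`. -/
structure IsDirectorFlow (T : ℝ) (u : Fin n → ℝ → EuclideanSpace ℝ (Fin n) → ℝ)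
    (P : ℝ → EuclideanSpace ℝ (Fin n) → ℝ) (d N : κ → ℝ → EuclideanSpace ℝ (Fin n) → ℝ) :
    Prop where
  smooth_pressure : ∀ t ∈ Set.Ioo 0 T, ContDiff ℝ 2 (P t)
  smooth_director : ∀ k, ContDiff ℝ ∞ (Function.uncurry (d k))
  momentum : ∀ t ∈ Set.Ioo 0 T, ∀ j x,
    timeDeriv (u j) t x - lap (u j t) x + (∑ i, u i t x * pd i (u j t) x) + pd j (P t) x
      = -∑ i, pd i (fun y => ∑ k, pd i (d k t) y * pd j (d k t) y) x
  director : ∀ t ∈ Set.Ioo 0 T, ∀ k x,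
    timeDeriv (d k) t x + ∑ i, u i t x * pd i (d k t) x = lap (d k t) x + N k t x
  divfree : ∀ t ∈ Set.Ioo 0 T, ∀ x, ∑ i, pd i (u i t) x = 0

theorem statement10_general {T : ℝ} {u : Fin n → ℝ → EuclideanSpace ℝ (Fin n) → ℝ}
    {P : ℝ → EuclideanSpace ℝ (Fin n) → ℝ} {d N : κ → ℝ → EuclideanSpace ℝ (Fin n) → ℝ}
    (hsol : IsDirectorFlow T u P d N) (hu : ∀ j, IsSchwartzEvolution T (u j))
    (hd : ∀ i k, IsSchwartzEvolution T fun t => pd i (d k t)) :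
    ∀ t ∈ Set.Ioo 0 T,
      HasDerivAt (fun s => (1 / 2 : ℝ) * ((∑ i, ∑ j, ∫ x, pd i (u j s) x ^ 2)
          + ∑ k, ∫ x, lap (d k s) x ^ 2))
        (-(∑ i, ∑ j, ∑ k, ∫ x, pd k (u i t) x * pd i (u j t) x * pd k (u j t) x)
          - 2 * (∑ i, ∑ j, ∑ k, ∫ x, pd i (u j t) x * pd i (pd j (d k t)) x * lap (d k t) x)
          + (∫ x, ∑ k, lap (N k t) x * lap (d k t) x)
          - (∑ j, ∫ x, lap (u j t) x ^ 2) - ∑ i, ∑ k, ∫ x, pd i (lap (d k t)) x ^ 2) t := by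
  intro t ht
  have hgrad (i j) := ((hu j).pd i).hasDerivAt_integral_sq ht
  have hlap (k) := (IsSchwartzEvolution.lap_of_pd fun i => hd i k).hasDerivAt_integral_sq ht
  refine (((HasDerivAt.fun_sum fun i _ => HasDerivAt.fun_sum fun j _ => hgrad i j).add
    (HasDerivAt.fun_sum fun k _ => hlap k)).const_mul (1 / 2)).congr_deriv ?_
  have hdt (i k) : IsSchwartz (pd i (timeDeriv (d k) t)) := by
    simpa only [timeDeriv_pd (hsol.smooth_director k)] using (hd i k).isSchwartz_timeDeriv ht
  rw [← energy_balance (fun j => (hu j).isSchwartz ht) (fun j => (hu j).isSchwartz_timeDeriv ht)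
    (hsol.divfree t ht) (hsol.smooth_pressure t ht)
    (fun k => contDiff_time_slice (hsol.smooth_director k) t)
    (fun k => contDiff_time_slice (contDiff_uncurry_timeDeriv (hsol.smooth_director k)) t)
    (fun i k => (hd i k).isSchwartz ht) hdt (hsol.momentum t ht) (hsol.director t ht)]
  simp only [fun j => timeDeriv_pd (hu j).smooth, fun k => timeDeriv_lap (hsol.smooth_director k),
    ← Finset.mul_sum]
  ring

end EnergyIdentity

section Nematic

variable {T : ℝ} {u : ℝ → EuclideanSpace ℝ (Fin n) → EuclideanSpace ℝ (Fin n)}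
  {P : ℝ → EuclideanSpace ℝ (Fin n) → ℝ}
  {d : ℝ → EuclideanSpace ℝ (Fin n) → EuclideanSpace ℝ (Fin 3)}

theorem IsNLC.contDiff_velocity_apply (h : IsNLC n T u P d) (j : Fin n) :
    ContDiff ℝ ∞ (Function.uncurry fun t x => u t x j) :=
  contDiff_euclidean.1 h.smooth_u j

theorem IsNLC.contDiff_director_apply (h : IsNLC n T u P d) (k : Fin 3) :
    ContDiff ℝ ∞ (Function.uncurry fun t x => d t x k) :=
  contDiff_euclidean.1 h.smooth_d k

theorem IsNLC.isDirectorFlow (h : IsNLC n T u P d) :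
    IsDirectorFlow T (fun j t x => u t x j) P (fun k t x => d t x k)
      (fun k t x => (∑ i, ∑ k', pd i (fun z => d t z k') x ^ 2) * d t x k) where
  smooth_pressure t _ := contDiff_infty.1 (contDiff_time_slice h.smooth_P t) 2
  smooth_director := h.contDiff_director_apply
  momentum t ht j x := h.momentum t ht x j
  director t ht k x := h.director t ht x k
  divfree := h.divfree

theorem IsNLC.isSchwartzEvolution_velocity (h : IsNLC n T u P d) (hdecay : SchwartzDecay n T u d)
    (j : Fin n) : IsSchwartzEvolution T fun t x => u t x j :=
  ⟨h.contDiff_velocity_apply j, hdecay.1 j, hdecay.2.1 j⟩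

theorem IsNLC.isSchwartzEvolution_pd_director (h : IsNLC n T u P d)
    (hdecay : SchwartzDecay n T u d) (i : Fin n) (k : Fin 3) :
    IsSchwartzEvolution T fun t => pd i fun x => d t x k :=
  ⟨contDiff_uncurry_pd (h.contDiff_director_apply k) i, hdecay.2.2.1 i k, hdecay.2.2.2 i k⟩

end Nematic

/-- Energy identity at the H¹×H² level:
(d/dt)½(‖∇u‖² + ‖Δd‖²) + ‖Δu‖² + ‖∇Δd‖²
  = −Σ∫∂_k uᵢ ∂ᵢu_j ∂_k u_j − 2Σ∫∂ᵢu_j ∂ᵢ∂_j d_k Δd_k + ∫Δ(|∇d|²d)·Δd. -/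
theorem statement10 {T : ℝ}
    (u : ℝ → EuclideanSpace ℝ (Fin 3) → EuclideanSpace ℝ (Fin 3))
    (P : ℝ → EuclideanSpace ℝ (Fin 3) → ℝ)
    (d : ℝ → EuclideanSpace ℝ (Fin 3) → EuclideanSpace ℝ (Fin 3))
    (hsol : IsNLC 3 T u P d) (hdecay : SchwartzDecay 3 T u d) :
    ∀ t ∈ Set.Ioo (0:ℝ) T,
      HasDerivAt (fun s => (1/2 : ℝ) *
          ((∑ i, ∑ j, ∫ x, (pd i (fun y => u s y j) x) ^ 2)
            + ∑ k : Fin 3, ∫ x, (lap (fun y => d s y k) x) ^ 2))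
        ((-(∑ i, ∑ j, ∑ k, ∫ x, pd k (fun y => u t y i) x * pd i (fun y => u t y j) x
              * pd k (fun y => u t y j) x))
          - 2 * (∑ i, ∑ j, ∑ k : Fin 3,
              ∫ x, pd i (fun y => u t y j) x * pd i (pd j (fun y => d t y k)) x
                * lap (fun y => d t y k) x)
          + (∫ x, ∑ k : Fin 3,
              lap (fun y => (∑ i, ∑ k' : Fin 3, (pd i (fun z => d t z k') y) ^ 2) * d t y k) x
                * lap (fun y => d t y k) x)
          - (∑ j, ∫ x, (lap (fun y => u t y j) x) ^ 2)
          - ∑ i, ∑ k : Fin 3, ∫ x, (pd i (lap (fun y => d t y k)) x) ^ 2) t := by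
  exact statement10_general hsol.isDirectorFlow (hsol.isSchwartzEvolution_velocity hdecay)
    (hsol.isSchwartzEvolution_pd_director hdecay)
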